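/- Let k ≥ 3 be an integer and let G be a finite simple graph with circumference strictly less than k. Let P be a path of maximum length in G with vertices x_1, x_2, …, x_m in order. Then for every m' with 1 ≤ m' ≤ m, every path in G from x_1 to x_{m'} has length at most m' − 1 + 2(k − 2)². -/

import Mathlib

open SimpleGraph

theorem aux_first_hit {V : Type*} {G : SimpleGraph V} (S : V → Prop) {u v : V} (p : G.Walk u v)
    (hv : S v) : ∃ (y : V) (q : G.Walk u y) (r : G.Walk y v), p = q.append r ∧ S y ∧
      ∀ t ∈ q.support, S t → t = y := by
  induction p with
  | nil => exact ⟨_, .nil, .nil, rfl, hv, by simp⟩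
  | @cons u w v h p ih =>
    by_cases hu : S u
    · exact ⟨u, .nil, .cons h p, rfl, hu, by simp⟩
    · obtain ⟨y, q, r, e, hy, hq⟩ := ih hv
      refine ⟨y, .cons h q, r, by simp [e], hy, ?_⟩
      intro t ht hS
      rw [Walk.support_cons, List.mem_cons] at ht
      rcases ht with rfl | ht
      · exact absurd hS hu
      · exact hq t ht hS

theorem aux_isPath_append {V : Type*} {G : SimpleGraph V} {u v w : V} {p : G.Walk u v}
    {q : G.Walk v w} (hp : p.IsPath) (hq : q.IsPath)
    (h : ∀ t ∈ p.support, t ∈ q.support → t = v) : (p.append q).IsPath := by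
  rw [Walk.isPath_def, Walk.support_append, List.nodup_append']
  have hq' := (Walk.isPath_def q).1 hq
  rw [Walk.support_eq_cons, List.nodup_cons] at hq'
  refine ⟨(Walk.isPath_def p).1 hp, hq'.2, ?_⟩
  intro t ht ht2
  have := h t ht (List.mem_of_mem_tail ht2)
  subst this
  exact hq'.1 ht2

theorem aux_ear {V : Type*} {G : SimpleGraph V} {k : ℕ} (hk : 3 ≤ k)
    (hcirc : ∀ (v : V) (c : G.Walk v v), c.IsCycle → c.length < k)
    {u v : V} (huv : u ≠ v) (E F : G.Walk u v) (hE : E.IsPath) (hF : F.IsPath)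
    (h : ∀ t ∈ E.support, t ∈ F.support → t = u ∨ t = v) : E.length ≤ k - 2 := by
  cases E with
  | nil => simp
  | @cons _ w _ hadj E' =>
    by_cases hwv : w = v
    · subst hwv
      have : E' = .nil := by
        have := (Walk.cons_isPath_iff _ _).1 hE
        exact Walk.isPath_iff_eq_nil.1 this.1
      subst this
      simp; omega
    · have hE' := (Walk.cons_isPath_iff _ _).1 hE
      have hwF : w ∉ F.support := by
        intro hw
        rcases h w (by simp) hw with h1 | h1
        · exact hadj.ne h1.symm
        · exact hwv h1
      have hp : (E'.append F.reverse).IsPath := by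
        apply aux_isPath_append hE'.1 hF.reverse
        intro t ht ht2
        rw [Walk.support_reverse, List.mem_reverse] at ht2
        rcases h t (by simp [ht]) ht2 with h1 | h1
        · subst h1; exact absurd ht hE'.2
        · exact h1
      have hc : (Walk.cons hadj (E'.append F.reverse)).IsCycle := by
        rw [Walk.cons_isCycle_iff]
        refine ⟨hp, ?_⟩
        rw [Walk.edges_append, List.mem_append, Walk.edges_reverse, List.mem_reverse]
        rintro (h1 | h1)
        · exact hE'.2 (Walk.fst_mem_support_of_mem_edges _ h1)
        · exact hwF (Walk.snd_mem_support_of_mem_edges _ h1)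
      have := hcirc _ _ hc
      have hF1 : F.length ≠ 0 := fun h0 => huv (Walk.eq_of_length_eq_zero h0)
      simp only [Walk.length_cons, Walk.length_append, Walk.length_reverse] at this ⊢
      omega

theorem aux_count {V : Type*} [DecidableEq V] {G : SimpleGraph V} {k : ℕ} (hk : 3 ≤ k)
    (hcirc : ∀ (v : V) (c : G.Walk v v), c.IsCycle → c.length < k)
    (S : Finset V)
    (hS : ∀ u ∈ S, ∀ v ∈ S, ∃ F : G.Walk u v, F.IsPath ∧ ∀ t ∈ F.support, t ∈ S) :
    ∀ (n : ℕ) {u v : V} (Q : G.Walk u v), Q.length ≤ n → Q.IsPath → u ∈ S → v ∈ S →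
      Q.length + (k - 2) ≤ (k - 2) * (S.filter (· ∈ Q.support)).card := by
  intro n
  induction n with
  | zero =>
    intro u v Q hl hQ hu hv
    have : 1 ≤ (S.filter (· ∈ Q.support)).card :=
      Finset.card_pos.2 ⟨u, by simp [hu]⟩
    have := Nat.mul_le_mul_left (k - 2) this
    omega
  | succ n ih =>
    intro u v Q hl hQ hu hv
    cases Q with
    | nil => simp [Finset.filter_eq', hu]
    | @cons _ w _ hadj Q' =>
      have hQ' := (Walk.cons_isPath_iff _ _).1 hQ
      obtain ⟨y, q, r, e, hy, hq⟩ := aux_first_hit (· ∈ S) Q' hv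
      subst e
      have hr := hQ'.1.of_append_right
      have huq : u ∉ q.support := fun h => hQ'.2 (Walk.support_subset_support_append_left _ _ h)
      have hur : u ∉ r.support := fun h => hQ'.2 (Walk.support_subset_support_append_right _ _ h)
      have h1 := ih r (by simp only [Walk.length_cons, Walk.length_append] at hl; omega) hr hy hv
      obtain ⟨F, hF, hFS⟩ := hS u hu y hy
      have h2 : (Walk.cons hadj q).length ≤ k - 2 := by
        apply aux_ear hk hcirc _ _ F _ hF
        · intro t ht htF
          rw [Walk.support_cons, List.mem_cons] at ht
          rcases ht with rfl | ht
          · exact Or.inl rfl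
          · exact Or.inr (hq t ht (hFS t htF))
        · rintro rfl; exact hur (by simp)
        · rw [Walk.cons_isPath_iff]; exact ⟨hQ'.1.of_append_left, huq⟩
      have h3 : (S.filter (· ∈ r.support)).card + 1
          ≤ (S.filter (· ∈ (Walk.cons hadj (q.append r)).support)).card := by
        rw [← Finset.card_insert_of_notMem (a := u) (by simp [hur])]
        apply Finset.card_le_card
        intro t ht
        simp only [Finset.mem_insert, Finset.mem_filter] at ht
        simp only [Finset.mem_filter, Walk.support_cons, List.mem_cons, Walk.mem_support_append_iff]
        rcases ht with rfl | ht
        · exact ⟨hu, Or.inl rfl⟩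
        · exact ⟨ht.1, Or.inr (Or.inr ht.2)⟩
      have h4 := Nat.mul_le_mul_left (k - 2) h3
      rw [Nat.mul_add] at h4
      simp only [Walk.length_cons, Walk.length_append] at h2 ⊢
      omega

/-- One step of the two-path construction. -/
theorem aux_step {V : Type*} {G : SimpleGraph V} {a w b y : V} (hab : a ≠ b) (hyw : y ≠ w)
    (hadj : G.Adj w b) (A B : G.Walk a w)
    (hAB : ∀ t ∈ A.support, t ∈ B.support → t = a ∨ t = w)
    (r : G.Walk y b) (hy : y ∈ A.support)
    (hr : ∀ t ∈ r.support, (t ∈ A.support ∨ t ∈ B.support) → t = y) (hA : A.IsPath) :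
    ∃ A' B' : G.Walk a b, ∀ t ∈ A'.support, t ∈ B'.support → t = a ∨ t = b := by
  classical
  refine ⟨(A.takeUntil y hy).append r, B.concat hadj, ?_⟩
  intro t ht ht2
  rw [Walk.mem_support_append_iff] at ht
  rw [Walk.support_concat, List.mem_append, List.mem_singleton] at ht2
  rcases ht2 with ht2 | ht2
  · have key : t ∈ (A.takeUntil y hy).support → t = a := by
      intro h
      rcases hAB t (Walk.support_takeUntil_subset_support _ _ h) ht2 with h1 | h1
      · exact h1
      · subst h1
        exact absurd h (Walk.endpoint_notMem_support_takeUntil hA hy hyw.symm)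
    rcases ht with h | h
    · exact Or.inl (key h)
    · have := hr t h (Or.inr ht2)
      subst this
      exact Or.inl (key (by simp))
  · exact Or.inr ht2

theorem aux_whitney {V : Type*} {G : SimpleGraph V} {a : V} :
    ∀ (n : ℕ) {b : V} (R : G.Walk b a), R.length ≤ n → R.IsPath → a ≠ b →
      (∀ z, z ≠ a → z ≠ b → ∃ W : G.Walk a b, z ∉ W.support) →
      ∃ A B : G.Walk a b, ∀ t ∈ A.support, t ∈ B.support → t = a ∨ t = b := by
  classical
  intro n
  induction n with
  | zero =>
    intro b R hl _ hab
    exact absurd (Walk.eq_of_length_eq_zero (Nat.le_zero.1 hl)).symm hab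
  | succ n ih =>
    intro b R hl hR hab hsep
    cases R with
    | nil => exact absurd rfl hab
    | @cons _ w _ hbw R' =>
      have hR' := (Walk.cons_isPath_iff _ _).1 hR
      by_cases haw : a = w
      · subst haw
        refine ⟨.cons hbw.symm .nil, .cons hbw.symm .nil, ?_⟩
        intro t ht _
        simpa using ht
      · obtain ⟨A, B, hAB⟩ := ih R' (by simpa using hl) hR'.1 haw (by
          intro z hza hzw
          by_cases hzb : z = b
          · subst hzb
            exact ⟨R'.reverse, by simpa using hR'.2⟩
          · obtain ⟨W, hW⟩ := hsep z hza hzb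
            refine ⟨W.concat hbw, ?_⟩
            rw [Walk.support_concat, List.mem_append, List.mem_singleton]
            rintro (h | h)
            · exact hW h
            · exact hzw h)
        have hAB' : ∀ t ∈ A.bypass.support, t ∈ B.bypass.support → t = a ∨ t = w :=
          fun t h1 h2 => hAB t (Walk.support_bypass_subset_support _ h1)
            (Walk.support_bypass_subset_support _ h2)
        obtain ⟨D, hD⟩ := hsep w (Ne.symm haw) hbw.ne'
        obtain ⟨y, q, r, e, hy, hq⟩ := aux_first_hit
          (fun t => t ∈ A.bypass.support ∨ t ∈ B.bypass.support) D.reverse (by simp)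
        have hyw : y ≠ w := by
          rintro rfl
          apply hD
          rw [← List.mem_reverse, ← Walk.support_reverse, e]
          simp
        rcases hy with hy | hy
        · exact aux_step hab hyw hbw.symm A.bypass B.bypass hAB' q.reverse hy
            (by simpa using hq) A.bypass_isPath
        · refine aux_step hab hyw hbw.symm B.bypass A.bypass (fun t h1 h2 => hAB' t h2 h1)
            q.reverse hy ?_ B.bypass_isPath
          intro t ht h
          exact hq t (by simpa using ht) h.symm

theorem aux_block {V : Type*} {G : SimpleGraph V} {k : ℕ} (hk : 3 ≤ k)
    (hcirc : ∀ (v : V) (c : G.Walk v v), c.IsCycle → c.length < k)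
    {a b : V} (hab : a ≠ b)
    (hsep : ∀ z, z ≠ a → z ≠ b → ∃ W : G.Walk a b, z ∉ W.support)
    (Q : G.Walk a b) (hQ : Q.IsPath) : Q.length ≤ (k - 2) ^ 2 := by
  classical
  obtain ⟨A, B, hAB⟩ := aux_whitney Q.reverse.length Q.reverse le_rfl hQ.reverse hab hsep
  have hA : A.bypass.length ≤ k - 2 :=
    aux_ear hk hcirc hab A.bypass B.bypass A.bypass_isPath B.bypass_isPath
      fun t h1 h2 => hAB t (Walk.support_bypass_subset_support _ h1)
            (Walk.support_bypass_subset_support _ h2)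
  have h := aux_count hk hcirc A.bypass.support.toFinset (by
    intro u hu v hv
    rw [List.mem_toFinset] at hu hv
    let F := (A.bypass.takeUntil u hu).reverse.append (A.bypass.takeUntil v hv)
    refine ⟨F.bypass, F.bypass_isPath, ?_⟩
    intro t ht
    have ht := Walk.support_bypass_subset_support _ ht
    rw [Walk.mem_support_append_iff, Walk.support_reverse, List.mem_reverse] at ht
    rw [List.mem_toFinset]
    rcases ht with ht | ht <;> exact Walk.support_takeUntil_subset_support _ _ ht)
    Q.length Q le_rfl hQ (by simp) (by simp)
  have h1 : (A.bypass.support.toFinset.filter (· ∈ Q.support)).card ≤ (k - 2) + 1 := by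
    refine (Finset.card_filter_le _ _).trans ((List.toFinset_card_le _).trans ?_)
    rw [Walk.length_support]; omega
  have h2 := Nat.mul_le_mul_left (k - 2) h1
  rw [Nat.mul_add, ← pow_two] at h2
  omega

/-- The last separating vertex along a path. -/
theorem aux_last {V : Type*} {G : SimpleGraph V} {x b : V} :
    ∀ (n : ℕ) {z : V} (R₁ : G.Walk x z) (R₂ : G.Walk z b), R₂.length ≤ n → z ≠ b →
      (∀ W : G.Walk x b, z ∈ W.support) →
      ∃ (a : V) (S₁ : G.Walk x a) (S₂ : G.Walk a b), R₁.append R₂ = S₁.append S₂ ∧ a ≠ b ∧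
        (∀ W : G.Walk x b, a ∈ W.support) ∧
        ∀ z, z ≠ a → z ≠ b → ∃ W : G.Walk a b, z ∉ W.support := by
  classical
  intro n
  induction n with
  | zero =>
    intro z R₁ R₂ hl hzb
    exact absurd (Walk.eq_of_length_eq_zero (Nat.le_zero.1 hl)) hzb
  | succ n ih =>
    intro z R₁ R₂ hl hzb hz
    by_cases hg : ∀ z', z' ≠ z → z' ≠ b → ∃ W : G.Walk z b, z' ∉ W.support
    · exact ⟨z, R₁, R₂, rfl, hzb, hz, hg⟩
    · push Not at hg
      obtain ⟨z', h1, h2, h3⟩ := hg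
      have hlt := Walk.length_dropUntil_lt_length (h3 R₂) h1
      obtain ⟨a, S₁, S₂, e, hh⟩ := ih (R₁.append (R₂.takeUntil z' (h3 R₂)))
        (R₂.dropUntil z' (h3 R₂)) (by omega) h2
        (fun W => Walk.support_dropUntil_subset_support W (hz W) (h3 _))
      refine ⟨a, S₁, S₂, ?_, hh⟩
      rw [← e, ← Walk.append_assoc, Walk.take_spec]

theorem aux_main {V : Type*} (G : SimpleGraph V)
    {k : ℕ} (hk : 3 ≤ k)
    (hcirc : ∀ (v : V) (c : G.Walk v v), c.IsCycle → c.length < k)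
    {x y b : V} (P₁ : G.Walk x b) (P₂ : G.Walk b y) (hP : (P₁.append P₂).IsPath)
    (hmax : ∀ (a b : V) (R : G.Walk a b), R.IsPath → R.length ≤ (P₁.append P₂).length)
    (Q : G.Walk x b) (hQ : Q.IsPath) : Q.length ≤ P₁.length + (k - 2) ^ 2 := by
  classical
  by_cases hxb : x = b
  · subst hxb
    rw [Walk.isPath_iff_eq_nil.1 hQ]
    simp
  obtain ⟨a, S₁, S₂, e, hab, ha, hsep⟩ :=
    aux_last P₁.length (Walk.nil : G.Walk x x) P₁ le_rfl hxb (fun W => by simp)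
  rw [Walk.nil_append] at e
  subst e
  obtain ⟨Q₁, Q₂, -, -, rfl⟩ := (hQ.mem_support_iff_exists_append).1 (ha Q)
  have h2 := aux_block hk hcirc hab hsep Q₂ hQ.of_append_right
  have hQ₁ := hQ.of_append_left
  have hS₂ := hP.of_append_left.of_append_right
  have haP₂ : a ∉ P₂.support := fun h =>
    hP.ne_of_mem_support_of_append hab (x := a) (y := a) (by simp) h rfl
  rw [← Walk.append_assoc] at hP hmax
  have hpath : (Q₁.append (S₂.append P₂)).IsPath := by
    refine aux_isPath_append hQ₁ hP.of_append_right ?_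
    intro t ht ht2
    by_contra hta
    have hn := Walk.endpoint_notMem_support_takeUntil hQ₁ ht (Ne.symm hta)
    rw [Walk.mem_support_append_iff] at ht2
    rcases ht2 with ht2 | ht2
    · have := ha ((Q₁.takeUntil t ht).append (S₂.dropUntil t ht2))
      rw [Walk.mem_support_append_iff] at this
      rcases this with h | h
      · exact hn h
      · rw [← Walk.take_spec S₂ ht2] at hS₂
        exact hS₂.ne_of_mem_support_of_append (x := a) (y := a) (Ne.symm hta) (by simp) h rfl
    · have := ha ((Q₁.takeUntil t ht).append (P₂.takeUntil t ht2).reverse)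
      rw [Walk.mem_support_append_iff, Walk.support_reverse, List.mem_reverse] at this
      rcases this with h | h
      · exact hn h
      · exact haP₂ (Walk.support_takeUntil_subset_support _ _ h)
  have := hmax _ _ _ hpath
  simp only [Walk.length_append] at this ⊢
  omega

theorem stmt_10 {V : Type*} [Fintype V] (G : SimpleGraph V)
    {k : ℕ} (hk : 3 ≤ k)
    (hcirc : ∀ (v : V) (c : G.Walk v v), c.IsCycle → c.length < k)
    {x₁ xₘ : V} (P : G.Walk x₁ xₘ) (hP : P.IsPath)
    (hmax : ∀ (a b : V) (R : G.Walk a b), R.IsPath → R.length ≤ P.length) :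
    ∀ (m' : ℕ) (h1 : 1 ≤ m') (h2 : m' ≤ P.support.length)
      (Q : G.Walk x₁ (P.support.get ⟨m' - 1, by omega⟩)), Q.IsPath →
      Q.length ≤ m' - 1 + 2 * (k - 2) ^ 2 := by
  intro m' h1 h2 Q hQ
  have key : ∀ (b : V) (hb : b = P.getVert (m' - 1)) (Q : G.Walk x₁ b), Q.IsPath →
      Q.length ≤ m' - 1 + 2 * (k - 2) ^ 2 := by
    rintro b rfl Q hQ
    have := aux_main G hk hcirc (P.take (m' - 1)) (P.drop (m' - 1))
      (by rwa [Walk.append_take_drop_eq]) (by rwa [Walk.append_take_drop_eq]) Q hQ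
    rw [Walk.take_length] at this
    have := Nat.min_le_left (m' - 1) P.length
    omega
  exact key _ (by rw [List.get_eq_getElem, Walk.support_getElem_eq_getVert]) Q hQ
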